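/- Let S be a complete c-semiring, Σ an alphabet, A : List Σ → S a formal power series, and U_A its universal weighted automaton. Then for every factorization (X, Y) of A, the past and future series of the state (X, Y) in U_A are exactly its components: Past_{U_A}(X, Y) = X and Fut_{U_A}(X, Y) = Y. -/

import Mathlib

/-!
A factorization `(X, Y)` of `A` is a closed pair of the Galois connection given by `X·Y ≤ A`: `X` is
the largest series with `X·Y ≤ A`, and `Y` the largest for `X`. So `a ≤ X u` means that
`a * Y v ≤ A (u ++ v)` for all `v`, and dually (`IsFactorization.le_left_iff`,
`IsFactorization.le_right_iff`). In the same style, `s ≤ etaA A p σ q` means that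
`X u * Y' v * s ≤ A (u ++ σ :: v)` for all `u`, `v`, where `p = (X, Y)` and `q = (X', Y')`.

For the upper bounds, these characterizations give `X u * etaA A p σ q ≤ X' (u ++ [σ])` and
`etaA A p σ q * Y' v ≤ Y (σ :: v)`, and induction on the word bounds past and future.

For the lower bounds, each word `w` yields two factorizations: `pastState A w`, whose right
component is `A (w ++ ·)` and whose left component is `1` at `w`, and `futState A w`, whose left
component is `A (· ++ w)` and whose right component is `1` at `w`. The transition from
`pastState A w` to `(X, Y)` by `σ` has weight at least `X (w ++ [σ])`, and the transition from
`(X, Y)` to `futState A w` has weight at least `Y (σ :: w)`. Hence induction on the word gives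
`X ≤ past` and `Y ≤ fut`: the rest of the path has weight `1`.
-/

/-- A complete c-semiring: a complete lattice with a commutative monoid
multiplication distributing over arbitrary suprema, whose unit is the top element.
Addition is join, zero is `⊥`, infinitary sums are suprema. -/
class CompleteCSemiring (S : Type*) extends CompleteLattice S, CommMonoid S where
  mul_sSup : ∀ (a : S) (s : Set S), a * sSup s = ⨆ b ∈ s, a * b
  one_eq_top : (1 : S) = ⊤

namespace FPS

open Classical
noncomputable section

variable {S : Type*} [CompleteCSemiring S] {α : Type*}

/-- Cauchy product of formal power series. -/
def cauchy (A B : List α → S) : List α → S :=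
  fun w => ⨆ (u : List α) (v : List α) (_ : u ++ v = w), A u * B v

/-- Left quotient of `A` by the series `X`. -/
def lquot (X A : List α → S) : List α → S := fun v => ⨆ u : List α, X u * A (u ++ v)

/-- Right quotient of `A` by the series `Y`. -/
def rquot (A Y : List α → S) : List α → S := fun v => ⨆ u : List α, A (v ++ u) * Y u

/-- Left residual `X \ A`. -/
def lres (X A : List α → S) : List α → S := sSup {Z | cauchy X Z ≤ A}

/-- Right residual `A / Y`. -/
def rres (A Y : List α → S) : List α → S := sSup {Z | cauchy Z Y ≤ A}

/-- Residual in the semiring `S`: `a ⇨ b`. -/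
def resid (a b : S) : S := sSup {x | a * x ≤ b}

/-- Inclusion degree of the series `f` into `g`. -/
def incl (f g : List α → S) : S := ⨅ u : List α, resid (f u) (g u)

/-- A word viewed as a series: `1` at `u` and `⊥` elsewhere. -/
def wordSeries (u : List α) : List α → S := fun w => if w = u then 1 else ⊥

/-- Reversal of a series. -/
def rev (A : List α → S) : List α → S := fun w => A w.reverse

/-- Extended transition map of a weighted automaton. -/
def deltaStar {Q : Type*} (δ : Q → α → Q → S) : Q → List α → Q → S
  | q, [], p => ⨆ _ : q = p, 1
  | q, a :: w, p => ⨆ r : Q, δ q a r * deltaStar δ r w p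

/-- Behaviour of a weighted automaton. -/
def behavior {Q : Type*} (δ : Q → α → Q → S) (I F : Q → S) : List α → S :=
  fun w => ⨆ (p : Q) (q : Q), I p * deltaStar δ p w q * F q

/-- Past of a state of a weighted automaton. -/
def past {Q : Type*} (δ : Q → α → Q → S) (I : Q → S) (q : Q) : List α → S :=
  fun w => ⨆ p : Q, I p * deltaStar δ p w q

/-- Future of a state of a weighted automaton. -/
def fut {Q : Type*} (δ : Q → α → Q → S) (F : Q → S) (q : Q) : List α → S :=
  fun w => ⨆ p : Q, deltaStar δ q w p * F p

/-- A series is DWA-regular if it is recognized by a finite deterministic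
weighted automaton. -/
def DWARegular (A : List α → S) : Prop :=
  ∃ (Q : Type) (_ : Fintype Q) (δ : Q → α → Q) (q0 : Q) (F : Q → S),
    ∀ w : List α, A w = F (w.foldl δ q0)

/-- A series is regular if it is the behaviour of a finite weighted automaton. -/
def Regular (A : List α → S) : Prop :=
  ∃ (Q : Type) (_ : Fintype Q) (δ : Q → α → Q → S) (I F : Q → S),
    behavior δ I F = A

/-- `(X, Y)` is a factorization of `A`. -/
def IsFactorization (A X Y : List α → S) : Prop :=
  cauchy X Y ≤ A ∧
    ∀ X' Y' : List α → S, X ≤ X' → Y ≤ Y' → cauchy X' Y' ≤ A → X' = X ∧ Y' = Y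

/-- The set of factorizations of `A` (states of the universal weighted automaton). -/
def Fact (A : List α → S) := {p : (List α → S) × (List α → S) // IsFactorization A p.1 p.2}

/-- Initial weights of the universal weighted automaton. -/
def JA (A : List α → S) (p : Fact A) : S := p.1.1 []

/-- Final weights of the universal weighted automaton. -/
def GA (A : List α → S) (p : Fact A) : S := p.1.2 []

/-- Transition weights of the universal weighted automaton. -/
def etaA (A : List α → S) (p : Fact A) (σ : α) (q : Fact A) : S :=
  incl (cauchy (cauchy p.1.1 (wordSeries [σ])) q.1.2) A

/-- The relation `u ≡_A v`. -/
def eqA (A : List α → S) : Setoid (List α) where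
  r u v := ∀ w, A (u ++ w) = A (v ++ w)
  iseqv := ⟨fun _ _ => rfl, fun h w => (h w).symm, fun h1 h2 w => (h1 w).trans (h2 w)⟩

end

end FPS

namespace FPS

variable {S : Type*} [CompleteCSemiring S] {α : Type*}

instance : IsQuantale S where
  mul_sSup_distrib := CompleteCSemiring.mul_sSup
  sSup_mul_distrib s y := by
    rw [mul_comm, CompleteCSemiring.mul_sSup]
    simp_rw [mul_comm]

-- The library versions of the next two facts do not cover suprema indexed by a proposition, which
-- occur in `cauchy` and `deltaStar`.
lemma mul_iSup_sort {ι : Sort*} (a : S) (f : ι → S) : a * ⨆ i, f i = ⨆ i, a * f i := by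
  rw [iSup, mul_sSup_distrib, iSup_range]

lemma iSup_sort_mul {ι : Sort*} (f : ι → S) (a : S) : (⨆ i, f i) * a = ⨆ i, f i * a := by
  rw [iSup, sSup_mul_distrib, iSup_range]

lemma le_resid_iff {a b x : S} : x ≤ resid a b ↔ a * x ≤ b :=
  Quantale.rightMulResiduation_le_iff_mul_le

lemma cauchy_le_iff {X Y A : List α → S} :
    cauchy X Y ≤ A ↔ ∀ u v, X u * Y v ≤ A (u ++ v) := by
  simp only [Pi.le_def, cauchy, iSup_le_iff]
  exact ⟨fun h u v => h _ u v rfl, fun h w u v e => e ▸ h u v⟩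

lemma cauchy_cauchy_wordSeries_le_iff {X Y : List α → S} {σ : α} {B : List α → S} :
    cauchy (cauchy X (wordSeries [σ])) Y ≤ B ↔ ∀ u v, X u * Y v ≤ B (u ++ σ :: v) := by
  rw [cauchy_le_iff]
  constructor
  · intro h u v
    have h1 : X u ≤ cauchy X (wordSeries [σ]) (u ++ [σ]) := by
      have h2 := (cauchy_le_iff (X := X) (Y := wordSeries [σ])).1 le_rfl u [σ]
      simpa [wordSeries] using h2
    refine (mul_le_mul_left h1 _).trans ?_
    simpa using h (u ++ [σ]) v
  · intro h u v
    simp only [cauchy, iSup_sort_mul, iSup_le_iff]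
    rintro u' w rfl
    by_cases hw : w = [σ]
    · subst hw
      simpa [wordSeries] using h u' v
    · simp [wordSeries, hw]

lemma le_incl_iff {f g : List α → S} {s : S} :
    s ≤ incl f g ↔ f ≤ fun u => resid s (g u) := by
  simp only [incl, le_iInf_iff, le_resid_iff, Pi.le_def, mul_comm]

lemma le_etaA_iff {A : List α → S} {p q : Fact A} {σ : α} {s : S} :
    s ≤ etaA A p σ q ↔ ∀ u v, p.1.1 u * q.1.2 v * s ≤ A (u ++ σ :: v) := by
  rw [etaA, le_incl_iff, cauchy_cauchy_wordSeries_le_iff]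
  simp only [le_resid_iff, mul_comm]

/-- Only `X` is enlarged: `Y` being fixed, maximality makes `X` contain every series `X'` with
`X'·Y ≤ A`, in particular the pointwise largest one. -/
lemma IsFactorization.le_left_iff {A X Y : List α → S} (h : IsFactorization A X Y)
    {u : List α} {a : S} : a ≤ X u ↔ ∀ v, a * Y v ≤ A (u ++ v) := by
  have hXY := cauchy_le_iff.1 h.1
  refine ⟨fun ha v => (mul_le_mul_left ha _).trans (hXY u v), fun ha => ?_⟩
  have := (h.2 (fun u => ⨅ v, resid (Y v) (A (u ++ v))) Y
    (fun u => le_iInf fun v => le_resid_iff.2 (mul_comm (X u) _ ▸ hXY u v)) le_rfl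
    (cauchy_le_iff.2 fun u v => by
      rw [mul_comm]; exact le_resid_iff.1 (iInf_le _ v))).1
  rw [← this]
  exact le_iInf fun v => le_resid_iff.2 (mul_comm a _ ▸ ha v)

lemma IsFactorization.le_right_iff {A X Y : List α → S} (h : IsFactorization A X Y)
    {v : List α} {b : S} : b ≤ Y v ↔ ∀ u, X u * b ≤ A (u ++ v) := by
  have hXY := cauchy_le_iff.1 h.1
  refine ⟨fun hb u => (mul_le_mul_right hb _).trans (hXY u v), fun hb => ?_⟩
  have := (h.2 X (fun v => ⨅ u, resid (X u) (A (u ++ v))) le_rfl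
    (fun v => le_iInf fun u => le_resid_iff.2 (hXY u v))
    (cauchy_le_iff.2 fun u v => le_resid_iff.1 (iInf_le _ u))).2
  rw [← this]
  exact le_iInf fun u => le_resid_iff.2 (hb u)

/-- The factorization of `A` whose right component is the derivative `v ↦ A (w ++ v)`. Its left
component is the largest possible; since that is `1` at `w`, the right one is maximal too. -/
def pastState (A : List α → S) (w : List α) : Fact A :=
  ⟨(fun u => ⨅ v, resid (A (w ++ v)) (A (u ++ v)), fun v => A (w ++ v)), by
    refine ⟨cauchy_le_iff.2 fun u v => ?_, fun X' Y' hX hY h => ?_⟩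
    · rw [mul_comm]; exact le_resid_iff.1 (iInf_le _ v)
    · rw [cauchy_le_iff] at h
      refine ⟨le_antisymm (fun u => le_iInf fun v => le_resid_iff.2 ?_) hX,
        le_antisymm (fun v => ?_) hY⟩
      · rw [mul_comm]
        exact (mul_le_mul_right (hY v) _).trans (h u v)
      · have h1 : 1 ≤ X' w :=
          le_trans (le_iInf fun v => le_resid_iff.2 (mul_one _).le) (hX w)
        simpa using (mul_le_mul_left h1 (Y' v)).trans (h w v)⟩

/-- The factorization of `A` whose left component is `u ↦ A (u ++ w)`. Its right component is the
largest possible; since that is `1` at `w`, the left one is maximal too. -/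
def futState (A : List α → S) (w : List α) : Fact A :=
  ⟨(fun u => A (u ++ w), fun v => ⨅ u, resid (A (u ++ w)) (A (u ++ v))), by
    refine ⟨cauchy_le_iff.2 fun u v => le_resid_iff.1 (iInf_le _ u), fun X' Y' hX hY h => ?_⟩
    rw [cauchy_le_iff] at h
    refine ⟨le_antisymm (fun u => ?_) hX,
      le_antisymm (fun v => le_iInf fun u => le_resid_iff.2 ?_) hY⟩
    · have h1 : 1 ≤ Y' w :=
        le_trans (le_iInf fun u => le_resid_iff.2 (mul_one _).le) (hY w)
      simpa using (mul_le_mul_right h1 (X' u)).trans (h u w)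
    · exact (mul_le_mul_left (hX u) _).trans (h u v)⟩

lemma one_le_pastState (A : List α → S) (w : List α) : 1 ≤ (pastState A w).1.1 w :=
  le_iInf fun _ => le_resid_iff.2 (mul_one _).le

lemma one_le_futState (A : List α → S) (w : List α) : 1 ≤ (futState A w).1.2 w :=
  le_iInf fun _ => le_resid_iff.2 (mul_one _).le

lemma left_mul_etaA_le {A : List α → S} (p q : Fact A) (σ : α) (u : List α) :
    p.1.1 u * etaA A p σ q ≤ q.1.1 (u ++ [σ]) := by
  rw [q.2.le_left_iff]
  intro v
  rw [mul_right_comm]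
  simpa using le_etaA_iff.1 (le_refl (etaA A p σ q)) u v

lemma etaA_mul_right_le {A : List α → S} (p q : Fact A) (σ : α) (v : List α) :
    etaA A p σ q * q.1.2 v ≤ p.1.2 (σ :: v) := by
  rw [p.2.le_right_iff]
  intro u
  rw [mul_comm (etaA A p σ q), ← mul_assoc]
  exact le_etaA_iff.1 le_rfl u v

lemma left_le_etaA_pastState {A : List α → S} (q : Fact A) (w : List α) (σ : α) :
    q.1.1 (w ++ [σ]) ≤ etaA A (pastState A w) σ q := by
  rw [le_etaA_iff]
  intro u v
  have h1 : q.1.1 (w ++ [σ]) * q.1.2 v ≤ A (w ++ σ :: v) := by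
    simpa using q.2.le_left_iff.1 (le_refl (q.1.1 (w ++ [σ]))) v
  have h2 : (pastState A w).1.1 u * A (w ++ σ :: v) ≤ A (u ++ σ :: v) :=
    (pastState A w).2.le_left_iff.1 le_rfl _
  rw [mul_assoc, mul_comm (q.1.2 v)]
  exact (mul_le_mul_right h1 _).trans h2

lemma right_le_etaA_futState {A : List α → S} (p : Fact A) (w : List α) (σ : α) :
    p.1.2 (σ :: w) ≤ etaA A p σ (futState A w) := by
  rw [le_etaA_iff]
  intro u v
  have h1 : p.1.1 u * p.1.2 (σ :: w) ≤ A (u ++ σ :: w) := p.2.le_right_iff.1 le_rfl _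
  have h2 : A (u ++ σ :: w) * (futState A w).1.2 v ≤ A (u ++ σ :: v) := by
    simpa [futState] using
      (futState A w).2.le_left_iff.1 (le_refl ((futState A w).1.1 (u ++ [σ]))) v
  rw [mul_right_comm]
  exact (mul_le_mul_left h1 _).trans h2

lemma deltaStar_nil_self {Q : Type*} (δ : Q → α → Q → S) (q : Q) :
    deltaStar δ q [] q = 1 := by
  simp [deltaStar]

lemma deltaStar_mul_le_snoc {Q : Type*} (δ : Q → α → Q → S) (p r q : Q) (w : List α) (σ : α) :
    deltaStar δ p w r * δ r σ q ≤ deltaStar δ p (w ++ [σ]) q := by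
  induction w generalizing p with
  | nil =>
    simp only [deltaStar, List.nil_append, iSup_sort_mul, iSup_le_iff]
    rintro rfl
    refine le_iSup_of_le q ?_
    simp
  | cons τ w ih =>
    simp only [deltaStar, List.cons_append, iSup_sort_mul, iSup_le_iff]
    intro t
    refine le_iSup_of_le t ?_
    rw [mul_assoc]
    exact mul_le_mul_right (ih t) _

lemma past_mul_le_snoc {Q : Type*} (δ : Q → α → Q → S) (I : Q → S) (r q : Q) (w : List α)
    (σ : α) : past δ I r w * δ r σ q ≤ past δ I q (w ++ [σ]) := by
  simp only [past, iSup_sort_mul, iSup_le_iff, mul_assoc]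
  exact fun p => le_iSup_of_le p (mul_le_mul_right (deltaStar_mul_le_snoc δ p r q w σ) _)

lemma fut_cons {Q : Type*} (δ : Q → α → Q → S) (F : Q → S) (q : Q) (w : List α) (σ : α) :
    fut δ F q (σ :: w) = ⨆ r, δ q σ r * fut δ F r w := by
  simp only [fut, deltaStar, iSup_sort_mul, mul_iSup_sort, mul_assoc]
  exact iSup_comm

/-- The bound is stated at an arbitrary prefix `u` so that the induction on `w` can absorb the
letters already read. -/
lemma left_mul_deltaStar_le {A : List α → S} (p q : Fact A) (w u : List α) :
    p.1.1 u * deltaStar (etaA A) p w q ≤ q.1.1 (u ++ w) := by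
  induction w generalizing p u with
  | nil =>
    simp only [deltaStar, mul_iSup_sort, iSup_le_iff]
    rintro rfl
    simp
  | cons σ w ih =>
    simp only [deltaStar, mul_iSup_sort, iSup_le_iff]
    intro r
    rw [← mul_assoc]
    refine (mul_le_mul_left (left_mul_etaA_le p r σ u) _).trans ?_
    simpa using ih r (u ++ [σ])

lemma past_le {A : List α → S} (q : Fact A) : past (etaA A) (JA A) q ≤ q.1.1 :=
  fun w => iSup_le fun p => left_mul_deltaStar_le p q w []

lemma le_past {A : List α → S} (q : Fact A) (w : List α) :
    q.1.1 w ≤ past (etaA A) (JA A) q w := by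
  induction w using List.reverseRecOn generalizing q with
  | nil =>
    refine le_iSup_of_le q ?_
    rw [deltaStar_nil_self, mul_one, JA]
  | append_singleton w σ ih =>
    calc q.1.1 (w ++ [σ]) = 1 * q.1.1 (w ++ [σ]) := (one_mul _).symm
      _ ≤ past (etaA A) (JA A) (pastState A w) w * etaA A (pastState A w) σ q :=
        mul_le_mul' ((one_le_pastState A w).trans (ih _)) (left_le_etaA_pastState q w σ)
      _ ≤ _ := past_mul_le_snoc _ _ _ _ _ _

lemma fut_le {A : List α → S} (q : Fact A) (w : List α) :
    fut (etaA A) (GA A) q w ≤ q.1.2 w := by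
  induction w generalizing q with
  | nil =>
    simp only [fut, deltaStar, iSup_sort_mul, iSup_le_iff]
    rintro p rfl
    simp [GA]
  | cons σ w ih =>
    rw [fut_cons]
    exact iSup_le fun r => (mul_le_mul_right (ih r) _).trans (etaA_mul_right_le q r σ w)

lemma le_fut {A : List α → S} (q : Fact A) (w : List α) :
    q.1.2 w ≤ fut (etaA A) (GA A) q w := by
  induction w generalizing q with
  | nil =>
    refine le_iSup_of_le q ?_
    rw [deltaStar_nil_self, one_mul, GA]
  | cons σ w ih =>
    rw [fut_cons]
    refine le_iSup_of_le (futState A w) ?_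
    calc q.1.2 (σ :: w) = q.1.2 (σ :: w) * 1 := (mul_one _).symm
      _ ≤ _ := mul_le_mul' (right_le_etaA_futState q w σ) ((one_le_futState A w).trans (ih _))

end FPS

open FPS in
/-- in the universal weighted automaton of `A`, the past and
future series of a state `(X, Y)` are exactly `X` and `Y`. -/
theorem universal_past_fut {S : Type*} [CompleteCSemiring S] {α : Type*}
    (A : List α → S) (p : Fact A) :
    past (etaA A) (JA A) p = p.1.1 ∧ fut (etaA A) (GA A) p = p.1.2 := by
  exact ⟨le_antisymm (past_le p) (le_past p), le_antisymm (fut_le p) (le_fut p)⟩
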